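/- Fixed point of the tree recursion at fully symmetric bitstrings: with the recursion H^{(m)}(a) = [ Σ_b f(b) H^{(m−1)}(b) exp(i Γ·(ab)/√d) exp(i hΓ·b/√d) ]^{d−1}, H^{(0)} ≡ 1, and Γ = (γ_1,...,γ_p, 0, −γ_p,...,−γ_1), one has H^{(m)}(a) = 1 for every m ≥ 0 whenever a is a reflection-symmetric bitstring, i.e. a_k = a_{−k} for all k = 1,...,p. -/

import Mathlib

/-!
The proof pairs off the strings that are not reflection symmetric.  For a level `t`, call the
positions `t ≤ i ≤ 2p - t` the core; `CoreSymm t b` says that `b` is reflection symmetric on the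
core, and `coreFlip t b` negates `b` there.

If `b` is symmetric on the core of level `t + 1` but not at `±t`, then flipping that core changes
only the two edges entering it, whose amplitudes `cos β` and `± i sin β` trade places, so `f`
changes sign (`fPath_coreFlip`).  Hence in `∑ b, f b * G b` all such `b` cancel in pairs as soon as
`G` is invariant under these flips; doing this for the levels `p - 1, …, k` reduces the sum to the
strings symmetric on the core of level `k` (`sum_fPath_eq_sum_coreSymm`).

The summand of the recursion has the required invariance because `Γ` is antisymmetric, provided
`H` has it as well.  So one proves by induction on `m` that `H (coreFlip t a) = H a` whenever `a`
is symmetric on the core of level `t` (`treeH_coreFlip`): both sums reduce to strings `b` symmetric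
on that core, where the summands agree.  For symmetric `a` (level `0`) the sum reduces to
symmetric `b`, where both phases vanish and `H b = 1` inductively, leaving `∑ b, f b = 1`.
-/

open Finset

/-- Matrix element `⟨a| e^{iβX} |b⟩` for `a, b ∈ {−1,1}` (encoded as `Bool`). -/
noncomputable def mixAmp (β : ℝ) (a b : Bool) : ℂ :=
  if a = b then (Real.cos β : ℂ) else Complex.I * (Real.sin β : ℂ)

/-- The spin value `±1` of a boolean. -/
def sgn (b : Bool) : ℝ := if b then 1 else -1

/-- The angle vector `Γ = (γ_1,…,γ_p,0,−γ_p,…,−γ_1)`, indexed by `Fin (2p+1)` with the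
central index `p` corresponding to the `0` entry. -/
def GamVec (p : ℕ) (γ : Fin p → ℝ) (i : Fin (2 * p + 1)) : ℝ :=
  if h : (i : ℕ) < p then γ ⟨i, h⟩
  else if h2 : (i : ℕ) = p then 0
  else -γ ⟨2 * p - (i : ℕ), by omega⟩

/-- The mixing angle of the `k`-th step along the index path `1→…→p→0→−p→…→−1`,
i.e. the conjugate-symmetric sequence `(β_1,…,β_p,−β_p,…,−β_1)`. -/
def stepAng (p : ℕ) (β : Fin p → ℝ) (k : Fin (2 * p)) : ℝ :=
  if h : (k : ℕ) < p then β ⟨k, h⟩ else -β ⟨2 * p - 1 - (k : ℕ), by omega⟩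

/-- The path product `f(a) = (1/2)·∏_k ⟨a_k| e^{±iβ_k X} |a_{k'}⟩` of mixing matrix
elements along the path `1→2→…→p→0→−p→…→−1`. -/
noncomputable def fPath (p : ℕ) (β : Fin p → ℝ) (a : Fin (2 * p + 1) → Bool) : ℂ :=
  (1 / 2) * ∏ k : Fin (2 * p), mixAmp (stepAng p β k) (a k.castSucc) (a k.succ)

/-- The tree recursion
`H^{(m)}(a) = [Σ_b f(b) H^{(m−1)}(b) exp(iΓ·(ab)/√d) exp(ihΓ·b/√d)]^{d−1}`,
with `H^{(0)} ≡ 1`. -/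
noncomputable def treeH (p d : ℕ) (γ β : Fin p → ℝ) (h : ℝ) :
    ℕ → (Fin (2 * p + 1) → Bool) → ℂ
  | 0, _ => 1
  | m + 1, a =>
      (∑ b : Fin (2 * p + 1) → Bool,
        fPath p β b * treeH p d γ β h m b *
          Complex.exp (Complex.I *
            (((∑ i, GamVec p γ i * (sgn (a i) * sgn (b i))) / Real.sqrt d : ℝ) : ℂ)) *
          Complex.exp (Complex.I *
            ((h * (∑ i, GamVec p γ i * sgn (b i)) / Real.sqrt d : ℝ) : ℂ))) ^ (d - 1)

/-- Symmetry of `b` under reflection on the core `t ≤ i ≤ 2p - t`.  At `t = p` the core is the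
central index alone and the condition is void; at `t = 0` it is full reflection symmetry. -/
def CoreSymm (p t : ℕ) (b : Fin (2 * p + 1) → Bool) : Prop :=
  ∀ i : Fin (2 * p + 1), t ≤ (i : ℕ) → (i : ℕ) + t ≤ 2 * p → b (Fin.rev i) = b i

/-- Negate all bits of `b` on the core `t ≤ i ≤ 2p - t`. -/
def coreFlip (p t : ℕ) (b : Fin (2 * p + 1) → Bool) : Fin (2 * p + 1) → Bool :=
  fun i => if t ≤ (i : ℕ) ∧ (i : ℕ) + t ≤ 2 * p then !(b i) else b i

lemma coreFlip_coreFlip (p t : ℕ) (b : Fin (2 * p + 1) → Bool) :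
    coreFlip p t (coreFlip p t b) = b := by
  funext i
  by_cases h : t ≤ (i : ℕ) ∧ (i : ℕ) + t ≤ 2 * p <;> simp [coreFlip, h]

lemma CoreSymm.coreFlip {p t : ℕ} {b : Fin (2 * p + 1) → Bool} (hb : CoreSymm p t b) :
    CoreSymm p t (coreFlip p t b) := by
  intro i h1 h2
  have h3 : t ≤ (Fin.rev i : ℕ) ∧ (Fin.rev i : ℕ) + t ≤ 2 * p := by
    rw [Fin.val_rev]; omega
  simp only [_root_.coreFlip, h1, h2, h3, and_self, if_true, hb i h1 h2]

lemma CoreSymm.mono {p s t : ℕ} (hst : s ≤ t) {b : Fin (2 * p + 1) → Bool}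
    (hb : CoreSymm p s b) : CoreSymm p t b :=
  fun i h1 h2 => hb i (by omega) (by omega)

lemma coreSymm_top (p : ℕ) (b : Fin (2 * p + 1) → Bool) : CoreSymm p p b := by
  intro i h1 h2
  have : Fin.rev i = i := by
    ext; rw [Fin.val_rev]; omega
  rw [this]

lemma coreSymm_iff_succ {p t : ℕ} (ht : t < p) (b : Fin (2 * p + 1) → Bool) :
    CoreSymm p t b ↔ CoreSymm p (t + 1) b ∧
      b ⟨2 * p - t, by omega⟩ = b ⟨t, by omega⟩ := by
  have hr : Fin.rev (⟨t, by omega⟩ : Fin (2 * p + 1)) = ⟨2 * p - t, by omega⟩ := by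
    ext; rw [Fin.val_rev]; simp only; omega
  have hr' : Fin.rev (⟨2 * p - t, by omega⟩ : Fin (2 * p + 1)) = ⟨t, by omega⟩ := by
    rw [← hr, Fin.rev_rev]
  constructor
  · intro hb
    refine ⟨hb.mono (by omega), ?_⟩
    rw [← hr]
    exact hb _ le_rfl (by simp only; omega)
  · rintro ⟨hb, he⟩ i h1 h2
    by_cases hi : (i : ℕ) = t
    · have hit : i = ⟨t, by omega⟩ := Fin.ext hi
      rw [hit, hr, he]
    by_cases hi' : (i : ℕ) = 2 * p - t
    · have hit : i = ⟨2 * p - t, by omega⟩ := Fin.ext hi'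
      rw [hit, hr', he]
    exact hb i (by omega) (by omega)

lemma mixAmp_not_not (β : ℝ) (x y : Bool) : mixAmp β (!x) (!y) = mixAmp β x y := by
  cases x <;> cases y <;> simp [mixAmp]

/-- The two edges entering the core contribute `± i sin β cos β`, the sign depending on the
common value `s` at the boundary of the core. -/
lemma mixAmp_pair_not (β : ℝ) (s x y : Bool) (hxy : y ≠ x) :
    mixAmp β x (!s) * mixAmp (-β) (!s) y = -(mixAmp β x s * mixAmp (-β) s y) := by
  cases x <;> cases y <;> cases s <;> simp [mixAmp] at hxy ⊢ <;> ring

lemma fPath_coreFlip {p t : ℕ} (ht : t < p) (β : Fin p → ℝ) (b : Fin (2 * p + 1) → Bool)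
    (hb : CoreSymm p (t + 1) b) (hne : b ⟨2 * p - t, by omega⟩ ≠ b ⟨t, by omega⟩) :
    fPath p β (coreFlip p (t + 1) b) = -fPath p β b := by
  let k₁ : Fin (2 * p) := ⟨t, by omega⟩
  let k₂ : Fin (2 * p) := ⟨2 * p - 1 - t, by omega⟩
  have hk : k₂ ∈ Finset.univ.erase k₁ := by
    simp only [Finset.mem_erase, Finset.mem_univ, and_true, ne_eq, k₁, k₂, Fin.mk.injEq]
    omega
  have split : ∀ F : Fin (2 * p) → ℂ,
      ∏ k, F k = (F k₁ * F k₂) * ∏ k ∈ (Finset.univ.erase k₁).erase k₂, F k := by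
    intro F
    rw [mul_assoc, Finset.mul_prod_erase _ _ hk, Finset.mul_prod_erase _ _ (Finset.mem_univ k₁)]
  have a₁ : stepAng p β k₁ = β ⟨t, ht⟩ := by simp [stepAng, k₁, ht]
  have a₂ : stepAng p β k₂ = -β ⟨t, ht⟩ := by
    have h1 : ¬ (2 * p - 1 - t < p) := by omega
    have h2 : 2 * p - 1 - (2 * p - 1 - t) = t := by omega
    simp [stepAng, k₂, h1, h2]
  have i₁ : k₁.castSucc = ⟨t, by omega⟩ := rfl
  have i₂ : k₂.succ = ⟨2 * p - t, by omega⟩ := by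
    ext; simp only [k₂, Fin.val_succ]; omega
  have i₃ : k₂.castSucc = Fin.rev k₁.succ := by
    ext; simp only [k₁, k₂, Fin.val_rev, Fin.val_succ, Fin.val_castSucc]; omega
  have hs : b k₂.castSucc = b k₁.succ := by
    rw [i₃]
    exact hb _ (by simp [k₁]) (by simp only [k₁, Fin.val_succ]; omega)
  have c₁ : coreFlip p (t + 1) b k₁.castSucc = b k₁.castSucc := by
    simp [coreFlip, k₁]
  have c₂ : coreFlip p (t + 1) b k₁.succ = !(b k₁.succ) := by
    have : t + 1 + (t + 1) ≤ 2 * p := by omega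
    simp [coreFlip, k₁, this]
  have c₃ : coreFlip p (t + 1) b k₂.castSucc = !(b k₂.castSucc) := by
    have h1 : t + 1 ≤ 2 * p - 1 - t := by omega
    have h2 : 2 * p - 1 - t + (t + 1) ≤ 2 * p := by omega
    simp [coreFlip, k₂, h1, h2]
  have c₄ : coreFlip p (t + 1) b k₂.succ = b k₂.succ := by
    have h2 : ¬ (2 * p - 1 - t + 1 + (t + 1) ≤ 2 * p) := by omega
    simp [coreFlip, k₂, h2]
  have rest : ∏ k ∈ (Finset.univ.erase k₁).erase k₂,
        mixAmp (stepAng p β k) (coreFlip p (t + 1) b k.castSucc) (coreFlip p (t + 1) b k.succ) =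
      ∏ k ∈ (Finset.univ.erase k₁).erase k₂,
        mixAmp (stepAng p β k) (b k.castSucc) (b k.succ) := by
    refine Finset.prod_congr rfl fun k hk => ?_
    simp only [Finset.mem_erase, Finset.mem_univ, and_true, ne_eq, Fin.ext_iff, k₁, k₂] at hk
    obtain ⟨n2, n1⟩ := hk
    have hlt := k.isLt
    -- Away from the two entering edges, both endpoints lie in the core or neither does.
    by_cases hc : t + 1 ≤ (k : ℕ) ∧ (k : ℕ) + (t + 1) ≤ 2 * p
    · have hc' : t + 1 ≤ (k : ℕ) + 1 ∧ (k : ℕ) + 1 + (t + 1) ≤ 2 * p := by omega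
      simp only [coreFlip, Fin.val_castSucc, Fin.val_succ, if_pos hc, if_pos hc', mixAmp_not_not]
    · have hc' : ¬ (t + 1 ≤ (k : ℕ) + 1 ∧ (k : ℕ) + 1 + (t + 1) ≤ 2 * p) := by omega
      simp only [coreFlip, Fin.val_castSucc, Fin.val_succ, if_neg hc, if_neg hc']
  have hne' : b k₂.succ ≠ b k₁.castSucc := by rw [i₁, i₂]; exact hne
  have key := mixAmp_pair_not (β ⟨t, ht⟩) (b k₁.succ) _ _ hne'
  unfold fPath
  rw [split, split, rest, a₁, a₂, c₁, c₂, c₃, c₄, hs, key]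
  ring

open Classical in
/-- Strings that are asymmetric at some level `≥ k` cancel in pairs, each being matched with its
flip on the core just inside its innermost asymmetric pair. -/
lemma sum_fPath_eq_sum_coreSymm {p k : ℕ} (hk : k ≤ p) (β : Fin p → ℝ)
    (G : (Fin (2 * p + 1) → Bool) → ℂ)
    (hG : ∀ t, k ≤ t → t ≤ p → ∀ b, CoreSymm p t b → G (coreFlip p t b) = G b) :
    ∑ b, fPath p β b * G b = ∑ b with CoreSymm p k b, fPath p β b * G b := by
  induction hk using Nat.decreasingInduction with
  | self => rw [Finset.filter_true_of_mem fun b _ => coreSymm_top p b]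
  | of_succ t ht ih =>
    rw [ih fun s hs => hG s (by omega)]
    have hsub : ({b | CoreSymm p t b} : Finset (Fin (2 * p + 1) → Bool)) ⊆
        ({b | CoreSymm p (t + 1) b} : Finset (Fin (2 * p + 1) → Bool)) := by
      intro b hb
      simp only [Finset.mem_filter, Finset.mem_univ, true_and] at hb ⊢
      exact hb.mono (by omega)
    rw [← Finset.sum_sdiff hsub, add_eq_right]
    have mem : ∀ b, b ∈ ({b | CoreSymm p (t + 1) b} : Finset (Fin (2 * p + 1) → Bool)) \
        ({b | CoreSymm p t b} : Finset (Fin (2 * p + 1) → Bool)) ↔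
        CoreSymm p (t + 1) b ∧ b ⟨2 * p - t, by omega⟩ ≠ b ⟨t, by omega⟩ := by
      intro b
      simp only [Finset.mem_sdiff, Finset.mem_filter, Finset.mem_univ, true_and,
        coreSymm_iff_succ ht b]
      tauto
    refine Finset.sum_involution (fun b _ => coreFlip p (t + 1) b) ?_ ?_ ?_ ?_
    · intro b hb
      obtain ⟨h1, h2⟩ := (mem b).1 hb
      rw [fPath_coreFlip ht β b h1 h2, hG (t + 1) (by omega) (by omega) b h1]
      ring
    · intro b _ _ heq
      have h1 := congrFun heq ⟨p, by omega⟩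
      have h2 : t + 1 ≤ p ∧ p + (t + 1) ≤ 2 * p := by omega
      simp [coreFlip, h2] at h1
    · intro b hb
      obtain ⟨h1, h2⟩ := (mem b).1 hb
      refine (mem _).2 ⟨h1.coreFlip, ?_⟩
      have h3 : ¬ (t + 1 ≤ 2 * p - t ∧ 2 * p - t + (t + 1) ≤ 2 * p) := by omega
      have h4 : ¬ (t + 1 ≤ t ∧ t + (t + 1) ≤ 2 * p) := by omega
      simpa only [coreFlip, if_neg h3, if_neg h4] using h2
    · intro b _
      exact coreFlip_coreFlip p (t + 1) b

lemma GamVec_rev (p : ℕ) (γ : Fin p → ℝ) (i : Fin (2 * p + 1)) :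
    GamVec p γ (Fin.rev i) = -GamVec p γ i := by
  have hi := i.isLt
  unfold GamVec
  rcases lt_trichotomy (i : ℕ) p with h | h | h
  · have h1 : ¬ (2 * p - (i : ℕ) < p) := by omega
    have h2 : ¬ (2 * p - (i : ℕ) = p) := by omega
    have h3 : 2 * p - (2 * p - (i : ℕ)) = i := by omega
    simp [h, h1, h2, h3]
  · have h2 : 2 * p - p = p := by omega
    simp [h, h2]
  · have h1 : 2 * p - (i : ℕ) < p := by omega
    have h2 : ¬ ((i : ℕ) < p) := by omega
    have h3 : ¬ ((i : ℕ) = p) := by omega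
    simp [h1, h2, h3]

lemma sum_eq_zero_of_rev_neg {n : ℕ} (F : Fin n → ℝ) (hF : ∀ i, F (Fin.rev i) = -F i) :
    ∑ i, F i = 0 := by
  have h := Equiv.sum_comp Fin.revPerm F
  simp only [Fin.revPerm_apply, hF, Finset.sum_neg_distrib] at h
  linarith

lemma sum_GamVec_symm (p : ℕ) (γ : Fin p → ℝ) (c : Fin (2 * p + 1) → ℝ)
    (hc : ∀ i, c (Fin.rev i) = c i) : ∑ i, GamVec p γ i * c i = 0 :=
  sum_eq_zero_of_rev_neg _ fun i => by rw [GamVec_rev, hc]; ring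

/-- On a common symmetric core the terms of `Γ·(ab)` at `±i` cancel, so flipping `b` there does
not affect `Γ·(ab)`. -/
lemma sum_GamVec_coreFlip {p t : ℕ} (γ : Fin p → ℝ) {a b : Fin (2 * p + 1) → Bool}
    (ha : CoreSymm p t a) (hb : CoreSymm p t b) :
    ∑ i, GamVec p γ i * (sgn (a i) * sgn (coreFlip p t b i)) =
      ∑ i, GamVec p γ i * (sgn (a i) * sgn (b i)) := by
  rw [← sub_eq_zero, ← Finset.sum_sub_distrib]
  simp only [← mul_sub]
  refine sum_GamVec_symm p γ _ fun i => ?_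
  have hiff : (t ≤ (Fin.rev i : ℕ) ∧ (Fin.rev i : ℕ) + t ≤ 2 * p) ↔
      (t ≤ (i : ℕ) ∧ (i : ℕ) + t ≤ 2 * p) := by
    rw [Fin.val_rev]; have := i.isLt; omega
  by_cases hc : t ≤ (i : ℕ) ∧ (i : ℕ) + t ≤ 2 * p
  · simp only [coreFlip, hiff, if_pos hc, ha i hc.1 hc.2, hb i hc.1 hc.2]
  · simp only [coreFlip, hiff, if_neg hc, sub_self, mul_zero]

lemma sum_GamVec_coreFlip_left {p t : ℕ} (γ : Fin p → ℝ) {a b : Fin (2 * p + 1) → Bool}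
    (ha : CoreSymm p t a) (hb : CoreSymm p t b) :
    ∑ i, GamVec p γ i * (sgn (coreFlip p t a i) * sgn (b i)) =
      ∑ i, GamVec p γ i * (sgn (a i) * sgn (b i)) := by
  simpa only [mul_comm (sgn (b _))] using sum_GamVec_coreFlip γ hb ha

lemma sum_GamVec_coreFlip_one {p t : ℕ} (γ : Fin p → ℝ) {b : Fin (2 * p + 1) → Bool}
    (hb : CoreSymm p t b) :
    ∑ i, GamVec p γ i * sgn (coreFlip p t b i) = ∑ i, GamVec p γ i * sgn (b i) := by
  have ha : CoreSymm p t (fun _ => true) := fun _ _ _ => rfl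
  simpa [sgn] using sum_GamVec_coreFlip γ ha hb

/-- The factor multiplying `f(b)` in the recursion for `H^{(m+1)}(a)`. -/
noncomputable def treeWeight (p d : ℕ) (γ β : Fin p → ℝ) (h : ℝ) (m : ℕ)
    (a b : Fin (2 * p + 1) → Bool) : ℂ :=
  treeH p d γ β h m b *
    Complex.exp (Complex.I *
      (((∑ i, GamVec p γ i * (sgn (a i) * sgn (b i))) / Real.sqrt d : ℝ) : ℂ)) *
    Complex.exp (Complex.I *
      ((h * (∑ i, GamVec p γ i * sgn (b i)) / Real.sqrt d : ℝ) : ℂ))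

lemma treeH_succ (p d : ℕ) (γ β : Fin p → ℝ) (h : ℝ) (m : ℕ) (a : Fin (2 * p + 1) → Bool) :
    treeH p d γ β h (m + 1) a =
      (∑ b, fPath p β b * treeWeight p d γ β h m a b) ^ (d - 1) := by
  simp only [treeH, treeWeight, mul_assoc]

/-- If `a` is symmetric on a core, then `H(a)` does not change when `a` is flipped there.  This
invariance at asymmetric strings is what allows the recursion to be closed at symmetric ones. -/
lemma treeH_coreFlip {p d : ℕ} (γ β : Fin p → ℝ) (h : ℝ) (m : ℕ) :
    ∀ t ≤ p, ∀ a, CoreSymm p t a →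
      treeH p d γ β h m (coreFlip p t a) = treeH p d γ β h m a := by
  induction m with
  | zero => intro t _ a _; simp only [treeH]
  | succ m ih =>
    intro t ht a ha
    have inv : ∀ a, CoreSymm p t a → ∀ s, t ≤ s → s ≤ p → ∀ b, CoreSymm p s b →
        treeWeight p d γ β h m a (coreFlip p s b) = treeWeight p d γ β h m a b := by
      intro a ha s hts hs b hb
      simp only [treeWeight, ih s hs b hb, sum_GamVec_coreFlip γ (ha.mono hts) hb,
        sum_GamVec_coreFlip_one γ hb]
    rw [treeH_succ, treeH_succ, sum_fPath_eq_sum_coreSymm ht β _ (inv a ha),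
      sum_fPath_eq_sum_coreSymm ht β _ (inv _ ha.coreFlip)]
    congr 1
    refine Finset.sum_congr rfl fun b hb => ?_
    have hbt : CoreSymm p t b := by simpa using hb
    simp only [treeWeight, sum_GamVec_coreFlip_left γ ha hbt]

/-- Path sums with free endpoints: the uniform vector is an eigenvector of `e^{iθX}` with
eigenvalue `e^{iθ}`. -/
lemma sum_prod_mixAmp (n : ℕ) (θ : Fin n → ℝ) :
    ∑ b : Fin (n + 1) → Bool, ∏ k : Fin n, mixAmp (θ k) (b k.castSucc) (b k.succ) =
      2 * Complex.exp (Complex.I * ((∑ k, θ k : ℝ) : ℂ)) := by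
  induction n with
  | zero => simp
  | succ n ih =>
    have hrow : ∀ (x : ℝ) (s : Bool),
        mixAmp x true s + mixAmp x false s = Complex.exp (Complex.I * x) := by
      intro x s
      rw [mul_comm, Complex.exp_mul_I]
      cases s <;> simp [mixAmp] <;> ring
    rw [← (Fin.consEquiv fun _ : Fin (n + 2) => Bool).sum_comp, Fintype.sum_prod_type_right]
    simp only [Fin.consEquiv_apply, Fin.prod_univ_succ, Fin.castSucc_zero, Fin.cons_zero,
      Fin.cons_succ, ← Fin.succ_castSucc, Fintype.sum_bool, ← add_mul, hrow]
    rw [← Finset.mul_sum, ih, Fin.sum_univ_succ]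
    push_cast
    rw [mul_add, Complex.exp_add]
    ring

lemma stepAng_rev (p : ℕ) (β : Fin p → ℝ) (k : Fin (2 * p)) :
    stepAng p β (Fin.rev k) = -stepAng p β k := by
  have hk := k.isLt
  have hr : (Fin.rev k : ℕ) = 2 * p - 1 - k := by rw [Fin.val_rev]; omega
  unfold stepAng
  by_cases h : (k : ℕ) < p
  · have h1 : ¬ (2 * p - 1 - (k : ℕ) < p) := by omega
    have h3 : 2 * p - 1 - (2 * p - 1 - (k : ℕ)) = k := by omega
    simp [-Fin.val_rev, hr, h, h1, h3]
  · have h1 : 2 * p - 1 - (k : ℕ) < p := by omega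
    simp [-Fin.val_rev, hr, h, h1]

lemma sum_fPath (p : ℕ) (β : Fin p → ℝ) : ∑ b, fPath p β b = 1 := by
  unfold fPath
  rw [← Finset.mul_sum, sum_prod_mixAmp, sum_eq_zero_of_rev_neg _ (stepAng_rev p β)]
  simp

/-- Fixed point of the tree recursion at fully symmetric bitstrings: `H^{(m)}(a) = 1`
for every `m ≥ 0` whenever `a` is reflection symmetric, i.e. `a_k = a_{−k}` for all `k`
(in index form, `a (Fin.rev i) = a i` for all `i`). -/
theorem treeH_symmetric_eq_one (p d : ℕ) (hd : 3 ≤ d) (γ β : Fin p → ℝ) (h : ℝ)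
    (m : ℕ) (a : Fin (2 * p + 1) → Bool) (ha : ∀ i, a (Fin.rev i) = a i) :
    treeH p d γ β h m a = 1 := by
  induction m generalizing a with
  | zero => simp only [treeH]
  | succ m ih =>
    have ha0 : CoreSymm p 0 a := fun i _ _ => ha i
    rw [treeH_succ, sum_fPath_eq_sum_coreSymm (Nat.zero_le p) β _ ?_]
    · have hone := sum_fPath_eq_sum_coreSymm (Nat.zero_le p) β (fun _ => 1) (by simp)
      simp only [mul_one, sum_fPath] at hone
      rw [Finset.sum_congr rfl (g := fun b => fPath p β b) ?_, ← hone, one_pow]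
      intro b hb
      have hb0 : CoreSymm p 0 b := by simpa using hb
      have hb' : ∀ i, b (Fin.rev i) = b i := fun i =>
        hb0 i (Nat.zero_le _) (by have := i.isLt; omega)
      rw [treeWeight, ih b hb', sum_GamVec_symm p γ (fun i => sgn (a i) * sgn (b i))
        (fun i => by simp only [ha, hb']), sum_GamVec_symm p γ (fun i => sgn (b i))
        (fun i => by simp only [hb'])]
      simp
    · intro s _ hs b hb
      simp only [treeWeight, treeH_coreFlip γ β h m s hs b hb,
        sum_GamVec_coreFlip γ (ha0.mono (Nat.zero_le s)) hb, sum_GamVec_coreFlip_one γ hb]
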